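/- arXiv:1301.0156 — 2 statements merged into one kernel-verified Lean document; each statement's English description precedes it below -/
import Mathlib

section
/- Let λ ∈ ℝ and define H_λ(x) = (24 − λx) ln x + [(9λ − 172)x + 12λ − 256] ln(x+1) + 4[(37 − 2λ)x − 3λ + 61] ln(x+2) and G_λ(x) = ln Γ(x) + x + 1/(12(1+x)²) + (λ − 48)/(48(1+x)) + H_λ(x)/24. Then lim_{x→∞} G_λ(x) = (124 + 12 ln(2π) − 7λ)/24. -/
/-- `H_λ(x)` as in the paper. -/
noncomputable def H (lam x : ℝ) : ℝ :=
  (24 - lam * x) * Real.log x +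
    ((9 * lam - 172) * x + 12 * lam - 256) * Real.log (x + 1) +
    4 * ((37 - 2 * lam) * x - 3 * lam + 61) * Real.log (x + 2)

/-- `G_λ(x)` as in the paper. -/
noncomputable def G (lam x : ℝ) : ℝ :=
  Real.log (Real.Gamma x) + x + 1 / (12 * (1 + x) ^ 2) +
    (lam - 48) / (48 * (1 + x)) + H lam x / 24

/-!
The coefficients of `H_λ` are such that replacing every `log (x + c)` by `log x` turns `H_λ(x) / 24`
into `-(x - 1/2) log x`, so Stirling's formula for `Γ` provides the `log (2π) / 2` in the limit, and
the replacement costs `(a x + b) (log (x + c) - log x) → a c` for each logarithm.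

Stirling's formula is known along the integers, and it extends to real arguments because its
remainder moves by only `O(1 / x)` on `[x, x + 1]`: log-convexity of `Γ` pins
`log Γ(x + t) - log Γ(x)` to `t log x` within `log (x + t) - log x` for `0 ≤ t ≤ 1`.
-/

open Filter Topology Set
open Real (log Gamma)

theorem log_add_sub_log_le_div {x t : ℝ} (hx : 0 < x) (hxt : 0 < x + t) :
    log (x + t) - log x ≤ t / x := by
  calc log (x + t) - log x = log ((x + t) / x) := (Real.log_div hxt.ne' hx.ne').symm
    _ ≤ (x + t) / x - 1 := Real.log_le_sub_one_of_pos (div_pos hxt hx)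
    _ = t / x := by field_simp; ring

theorem div_le_log_add_sub_log {x t : ℝ} (hx : 0 < x) (hxt : 0 < x + t) :
    t / (x + t) ≤ log (x + t) - log x := by
  have h := log_add_sub_log_le_div (x := x + t) (t := -t) hxt (by simpa using hx)
  rw [add_neg_cancel_right, neg_div] at h
  linarith

theorem log_add_sub_log_mem_Icc {x t : ℝ} (hx : 0 < x) (ht : t ∈ Icc (0 : ℝ) 1) :
    log (x + t) - log x ∈ Icc 0 (1 / x) := by
  have hxt : 0 < x + t := add_pos_of_pos_of_nonneg hx ht.1
  exact ⟨sub_nonneg.2 (Real.log_le_log hx (le_add_of_nonneg_right ht.1)),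
    (log_add_sub_log_le_div hx hxt).trans (div_le_div_of_nonneg_right ht.2 hx.le)⟩

theorem tendsto_affine_mul_log_add_sub_log (a b c : ℝ) :
    Tendsto (fun x ↦ (a * x + b) * (log (x + c) - log x)) atTop (𝓝 (a * c)) := by
  have hlin : Tendsto (fun x : ℝ ↦ a + b * x⁻¹) atTop (𝓝 (a + b * 0)) :=
    (tendsto_inv_atTop_zero.const_mul b).const_add a
  rw [mul_zero, add_zero] at hlin
  refine (hlin.mul (Real.tendsto_mul_log_one_add_div_atTop c)).congr' ?_
  filter_upwards [eventually_gt_atTop 0, eventually_gt_atTop (-c)] with x hx hxc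
  have hlog : log (1 + c / x) = log (x + c) - log x := by
    rw [← Real.log_div (by linarith) hx.ne', add_div, div_self hx.ne']
  rw [hlog]
  field_simp

theorem tendsto_atTop_of_tendsto_natCast {R α : Type*} [Ring R] [LinearOrder R]
    [IsStrictOrderedRing R] [FloorSemiring R] [PseudoMetricSpace α] {f : R → α} {l : α}
    {ε : ℕ → ℝ} (hf : Tendsto (fun n : ℕ ↦ f n) atTop (𝓝 l)) (hε : Tendsto ε atTop (𝓝 0))
    (hfε : ∀ᶠ n : ℕ in atTop, ∀ t ∈ Ico (0 : R) 1, dist (f n) (f (n + t)) ≤ ε n) :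
    Tendsto f atTop (𝓝 l) := by
  have hfloor : Tendsto (fun x : R ↦ ⌊x⌋₊) atTop atTop := tendsto_nat_floor_atTop
  refine (hf.comp hfloor).congr_dist
    (squeeze_zero' (.of_forall fun _ ↦ dist_nonneg) ?_ (hε.comp hfloor))
  filter_upwards [hfloor.eventually hfε, eventually_ge_atTop 0] with x hx hx0
  have hfract : x - ⌊x⌋₊ ∈ Ico (0 : R) 1 :=
    ⟨sub_nonneg.2 (Nat.floor_le hx0), sub_lt_iff_lt_add'.2 (Nat.lt_floor_add_one x)⟩
  simpa only [Function.comp_apply, add_sub_cancel] using hx _ hfract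

theorem log_Gamma_add_one {x : ℝ} (hx : 0 < x) :
    log (Gamma (x + 1)) = log (Gamma x) + log x := by
  rw [Real.Gamma_add_one hx.ne', Real.log_mul hx.ne' (Real.Gamma_pos_of_pos hx).ne', add_comm]

theorem log_Gamma_add_le {x t : ℝ} (hx : 0 < x) (ht : t ∈ Icc (0 : ℝ) 1) :
    log (Gamma (x + t)) ≤ log (Gamma x) + t * log x := by
  have hconv := Real.convexOn_log_Gamma.2 (mem_Ioi.2 hx) (mem_Ioi.2 (add_pos hx one_pos))
    (sub_nonneg.2 ht.2) ht.1 (sub_add_cancel 1 t)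
  simp only [Function.comp_apply, smul_eq_mul, log_Gamma_add_one hx] at hconv
  have hpoint : (1 - t) * x + t * (x + 1) = x + t := by ring
  rw [hpoint] at hconv
  linarith

theorem le_log_Gamma_add {x t : ℝ} (hx : 0 < x) (ht : t ∈ Icc (0 : ℝ) 1) :
    log (Gamma x) + log x - (1 - t) * log (x + t) ≤ log (Gamma (x + t)) := by
  have h := log_Gamma_add_le (add_pos_of_pos_of_nonneg hx ht.1)
    (Icc.mem_iff_one_sub_mem.1 ht)
  rw [add_assoc, add_sub_cancel, log_Gamma_add_one hx] at h
  linarith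

theorem abs_log_Gamma_add_sub_le {x t : ℝ} (hx : 0 < x) (ht : t ∈ Icc (0 : ℝ) 1) :
    |log (Gamma (x + t)) - log (Gamma x) - t * log x| ≤ 1 / x := by
  have hupper := log_Gamma_add_le hx ht
  have hlower := le_log_Gamma_add hx ht
  obtain ⟨hL₀, hL₁⟩ := log_add_sub_log_mem_Icc hx ht
  have htL : 0 ≤ t * (log (x + t) - log x) := mul_nonneg ht.1 hL₀
  rw [abs_le]
  constructor <;> linarith

theorem abs_mul_log_add_sub_log_sub_le {x t : ℝ} (hx : 0 < x) (ht : t ∈ Icc (0 : ℝ) 1) :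
    |(x + t - 1 / 2) * (log (x + t) - log x) - t| ≤ 1 / (2 * x) := by
  have hxt : 0 < x + t := add_pos_of_pos_of_nonneg hx ht.1
  obtain ⟨hL₀, hL₁⟩ := log_add_sub_log_mem_Icc hx ht
  have hupper := (le_div_iff₀' hx).1 (log_add_sub_log_le_div hx hxt)
  have hlower := (div_le_iff₀' hxt).1 (div_le_log_add_sub_log hx hxt)
  have htL : t * (log (x + t) - log x) ≤ log (x + t) - log x := mul_le_of_le_one_left hL₀ ht.2
  have hhalf : 1 / (2 * x) = 1 / x / 2 := by ring
  rw [abs_le, hhalf]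
  constructor <;> linarith

/-- Binet's function: the remainder in Stirling's formula for `log Γ`. -/
noncomputable def binet (x : ℝ) : ℝ :=
  log (Gamma x) - ((x - 1 / 2) * log x - x + log (2 * Real.pi) / 2)

theorem abs_binet_add_sub_le {x t : ℝ} (hx : 0 < x) (ht : t ∈ Icc (0 : ℝ) 1) :
    |binet (x + t) - binet x| ≤ 3 / (2 * x) := by
  calc |binet (x + t) - binet x|
      = |(log (Gamma (x + t)) - log (Gamma x) - t * log x)
          - ((x + t - 1 / 2) * (log (x + t) - log x) - t)| := by
        unfold binet
        ring_nf
    _ ≤ 1 / x + 1 / (2 * x) := (abs_sub _ _).trans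
        (add_le_add (abs_log_Gamma_add_sub_le hx ht) (abs_mul_log_add_sub_log_sub_le hx ht))
    _ = 3 / (2 * x) := by field_simp; norm_num

theorem binet_natCast {n : ℕ} (hn : n ≠ 0) :
    binet n = log (Stirling.stirlingSeq n) - log √Real.pi := by
  have hn₀ : (0 : ℝ) < n := Nat.cast_pos.2 hn.bot_lt
  have hfactorial : log (n.factorial : ℝ) = log (Gamma n) + log n := by
    rw [← Real.Gamma_nat_eq_factorial, log_Gamma_add_one hn₀]
  rw [binet, Stirling.log_stirlingSeq_formula, hfactorial, Real.log_sqrt Real.pi_pos.le,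
    Real.log_mul two_ne_zero Real.pi_ne_zero, Real.log_mul two_ne_zero hn₀.ne',
    Real.log_div hn₀.ne' (Real.exp_ne_zero 1), Real.log_exp]
  ring

theorem tendsto_binet_natCast : Tendsto (fun n : ℕ ↦ binet n) atTop (𝓝 0) := by
  have hlog := (Stirling.tendsto_stirlingSeq_sqrt_pi.log
    (Real.sqrt_ne_zero'.2 Real.pi_pos)).sub_const (log √Real.pi)
  rw [sub_self] at hlog
  refine hlog.congr' ?_
  filter_upwards [eventually_ne_atTop 0] with n hn
  exact (binet_natCast hn).symm

theorem tendsto_binet_atTop : Tendsto binet atTop (𝓝 0) := by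
  have hbound : Tendsto (fun n : ℕ ↦ 3 / (2 * (n : ℝ))) atTop (𝓝 0) :=
    (tendsto_natCast_atTop_atTop.const_mul_atTop two_pos).const_div_atTop 3
  refine tendsto_atTop_of_tendsto_natCast tendsto_binet_natCast hbound ?_
  filter_upwards [eventually_gt_atTop 0] with n hn t ht
  rw [dist_comm, Real.dist_eq]
  exact abs_binet_add_sub_le (Nat.cast_pos.2 hn) (Ico_subset_Icc_self ht)

theorem G_eq_binet_add (lam x : ℝ) :
    G lam x = binet x + log (2 * Real.pi) / 2
      + (1 / (12 * (1 + x) ^ 2) + (lam - 48) / (48 * (1 + x)))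
      + ((9 * lam - 172) * x + (12 * lam - 256)) * (log (x + 1) - log x) / 24
      + ((37 - 2 * lam) * x + (61 - 3 * lam)) * (log (x + 2) - log x) / 6 := by
  unfold G H binet
  ring

theorem stmt_11 (lam : ℝ) :
    Filter.Tendsto (G lam) Filter.atTop
      (nhds ((124 + 12 * Real.log (2 * Real.pi) - 7 * lam) / 24)) := by
  have hshift : Tendsto (fun x : ℝ ↦ 1 + x) atTop atTop :=
    tendsto_atTop_add_const_left _ 1 tendsto_id
  have hsq : Tendsto (fun x : ℝ ↦ 1 / (12 * (1 + x) ^ 2)) atTop (𝓝 0) :=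
    (((tendsto_pow_atTop two_ne_zero).comp hshift).const_mul_atTop (by norm_num)).const_div_atTop 1
  have hlin : Tendsto (fun x : ℝ ↦ (lam - 48) / (48 * (1 + x))) atTop (𝓝 0) :=
    (hshift.const_mul_atTop (by norm_num)).const_div_atTop _
  have hlog₁ := tendsto_affine_mul_log_add_sub_log (9 * lam - 172) (12 * lam - 256) 1
  have hlog₂ := tendsto_affine_mul_log_add_sub_log (37 - 2 * lam) (61 - 3 * lam) 2
  rw [funext (G_eq_binet_add lam)]
  convert (((tendsto_binet_atTop.add_const (log (2 * Real.pi) / 2)).add (hsq.add hlin)).add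
    (hlog₁.div_const 24)).add (hlog₂.div_const 6) using 2
  ring
end

section
/- Let λ > 0. Then the function f_λ(x) = [ψ'(x)]² + ψ''(x) − (x² + λx + 12)/(12x⁴(x+1)²) tends to −∞ as x → 0⁺. -/
/-- The digamma function `ψ(x) = Γ'(x)/Γ(x)`. -/
noncomputable def digamma (x : ℝ) : ℝ := deriv Real.Gamma x / Real.Gamma x

/-!
The recurrence `ψ⁽ⁿ⁾(x + 1) = ψ⁽ⁿ⁾(x) + (-1)ⁿ n! / xⁿ⁺¹` moves the singularity of the polygamma
functions at `0` into an explicit pole, the shifted functions being analytic there. It gives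
`ψ'(x)² + ψ''(x) = 1 / x⁴ - 2 / x³ + O(1 / x²)`, whereas the rational term is
`1 / x⁴ + (λ / 12 - 2) / x³ + O(1 / x²)`. Hence `x³ f_λ(x) → -λ / 12 < 0`.
-/

open Filter Topology

section Digamma

variable {x : ℝ}

theorem eventually_nhdsNE_forall_ne_neg_natCast (x : ℝ) :
    ∀ᶠ y : ℝ in 𝓝[≠] x, ∀ m : ℕ, y ≠ -m := by
  have hclosed : IsClosed ((fun m : ℕ => -(m : ℝ)) '' {m | -(m : ℝ) ≠ x}) :=
    ((Homeomorph.neg ℝ).isClosedEmbedding.comp Nat.isClosedEmbedding_coe_real).isClosedMap _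
      (isClosed_discrete _)
  have hmem : x ∉ (fun m : ℕ => -(m : ℝ)) '' {m | -(m : ℝ) ≠ x} := by
    rintro ⟨m, hm, rfl⟩
    exact hm rfl
  filter_upwards [nhdsWithin_le_nhds (hclosed.isOpen_compl.mem_nhds hmem), self_mem_nhdsWithin]
    with y hy hyx m rfl
  exact hy ⟨m, hyx, rfl⟩

theorem eventually_forall_ne_neg_natCast (hx : ∀ m : ℕ, x ≠ -m) :
    ∀ᶠ y : ℝ in 𝓝 x, ∀ m : ℕ, y ≠ -m := by
  filter_upwards [eventually_nhdsWithin_iff.1 (eventually_nhdsNE_forall_ne_neg_natCast x)]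
    with y hy
  obtain rfl | hyx := eq_or_ne y x
  exacts [hx, hy hyx]

theorem analyticAt_inv_Gamma (x : ℝ) : AnalyticAt ℝ (fun y => (Real.Gamma y)⁻¹) x := by
  have h := (Complex.differentiable_one_div_Gamma.analyticAt (x : ℂ)).re_ofReal
  simpa only [Complex.Gamma_ofReal, ← Complex.ofReal_inv, Complex.ofReal_re] using h

theorem analyticAt_Gamma (hx : ∀ m : ℕ, x ≠ -m) : AnalyticAt ℝ Real.Gamma x := by
  simpa only [inv_inv] using
    (analyticAt_inv_Gamma x).fun_inv (inv_ne_zero (Real.Gamma_ne_zero hx))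

theorem analyticAt_digamma (hx : ∀ m : ℕ, x ≠ -m) : AnalyticAt ℝ digamma x :=
  (analyticAt_Gamma hx).deriv.div (analyticAt_Gamma hx) (Real.Gamma_ne_zero hx)

theorem deriv_Gamma_add_one (hx : ∀ m : ℕ, x ≠ -m) :
    deriv Real.Gamma (x + 1) = Real.Gamma x + x * deriv Real.Gamma x := by
  have hx0 : x ≠ 0 := by simpa using hx 0
  have hΓ : (fun y => Real.Gamma (y + 1)) =ᶠ[𝓝 x] fun y => y * Real.Gamma y := by
    filter_upwards [eventually_ne_nhds hx0] with y hy
    exact Real.Gamma_add_one hy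
  rw [← deriv_comp_add_const, hΓ.deriv_eq,
    deriv_fun_mul differentiableAt_fun_id (Real.differentiableAt_Gamma hx), deriv_id'', one_mul]

theorem digamma_add_one (hx : ∀ m : ℕ, x ≠ -m) : digamma (x + 1) = digamma x + x⁻¹ := by
  have hx0 : x ≠ 0 := by simpa using hx 0
  have hΓ : Real.Gamma x ≠ 0 := Real.Gamma_ne_zero hx
  rw [digamma, digamma, deriv_Gamma_add_one hx, Real.Gamma_add_one hx0]
  field_simp
  ring

theorem iteratedDeriv_digamma_add_one (n : ℕ) (hx : ∀ m : ℕ, x ≠ -m) :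
    iteratedDeriv n digamma (x + 1) =
      iteratedDeriv n digamma x + (-1) ^ n * n.factorial / x ^ (n + 1) := by
  have hx0 : x ≠ 0 := by simpa using hx 0
  have hrec : (fun y => digamma (y + 1)) =ᶠ[𝓝 x] digamma + Inv.inv := by
    filter_upwards [eventually_forall_ne_neg_natCast hx] with y hy using digamma_add_one hy
  have hinv : iteratedDeriv n Inv.inv x = (-1) ^ n * n.factorial / x ^ (n + 1) := by
    rw [iteratedDeriv_eq_iterate, iter_deriv_inv, ← neg_add', zpow_neg, add_comm 1, div_eq_mul_inv]
    norm_cast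
  rw [← hinv, ← iteratedDeriv_add (analyticAt_digamma hx).contDiffAt (contDiffAt_inv ℝ hx0),
    ← hrec.iteratedDeriv_eq, iteratedDeriv_comp_add_const]

theorem deriv_digamma_add_one (hx : ∀ m : ℕ, x ≠ -m) :
    deriv digamma (x + 1) = deriv digamma x - 1 / x ^ 2 := by
  simpa [iteratedDeriv_one, neg_div, sub_eq_add_neg] using iteratedDeriv_digamma_add_one 1 hx

theorem deriv_deriv_digamma_add_one (hx : ∀ m : ℕ, x ≠ -m) :
    deriv (deriv digamma) (x + 1) = deriv (deriv digamma) x + 2 / x ^ 3 := by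
  simpa [iteratedDeriv_succ, iteratedDeriv_zero] using iteratedDeriv_digamma_add_one 2 hx

theorem tendsto_pow_three_mul_sq_deriv_digamma_add_sub :
    Tendsto (fun x => x ^ 3 * (deriv digamma x ^ 2 + deriv (deriv digamma) x - 1 / x ^ 4))
      (𝓝[≠] 0) (𝓝 (-2)) := by
  have hψ : AnalyticAt ℝ digamma (0 + 1) :=
    analyticAt_digamma fun m => by linarith [m.cast_nonneg (α := ℝ)]
  have hψ' : ContinuousAt (fun x => deriv digamma (x + 1)) 0 :=
    hψ.deriv.continuousAt.comp (f := (· + 1)) (by fun_prop)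
  have hψ'' : ContinuousAt (fun x => deriv (deriv digamma) (x + 1)) 0 :=
    hψ.deriv.deriv.continuousAt.comp (f := (· + 1)) (by fun_prop)
  let shifted : ℝ → ℝ := fun x => x ^ 3 * (deriv digamma (x + 1) ^ 2 +
    deriv (deriv digamma) (x + 1)) + 2 * x * deriv digamma (x + 1) - 2
  have hlim : ContinuousAt shifted 0 := by
    unfold shifted
    fun_prop
  have hval : shifted 0 = -2 := by simp [shifted]
  rw [← hval]
  refine (hlim.tendsto.mono_left nhdsWithin_le_nhds).congr' ?_
  filter_upwards [eventually_nhdsNE_forall_ne_neg_natCast 0] with x hx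
  have hx0 : x ≠ 0 := by simpa using hx 0
  simp only [shifted, deriv_digamma_add_one hx, deriv_deriv_digamma_add_one hx]
  field_simp
  ring

end Digamma

theorem tendsto_pow_three_mul_div_sub {𝕜 : Type*} [NormedField 𝕜] (a b : 𝕜) {c : 𝕜} (hc : c ≠ 0) :
    Tendsto (fun x => x ^ 3 * ((a * x ^ 2 + b * x + c) / (c * x ^ 4 * (x + 1) ^ 2) - 1 / x ^ 4))
      (𝓝[≠] 0) (𝓝 (b / c - 2)) := by
  have hlim : ContinuousAt (fun x : 𝕜 => ((a - c) * x + (b - 2 * c)) / (c * (x + 1) ^ 2)) 0 :=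
    ContinuousAt.div (by fun_prop) (by fun_prop) (by simpa using hc)
  have hne : ∀ᶠ x : 𝕜 in 𝓝 0, x + 1 ≠ 0 :=
    (continuous_add_const 1).continuousAt.eventually_ne (by simp)
  have hval : ((a - c) * 0 + (b - 2 * c)) / (c * (0 + 1) ^ 2) = b / c - 2 := by
    field_simp
    ring
  rw [← hval]
  refine (hlim.tendsto.mono_left nhdsWithin_le_nhds).congr' ?_
  filter_upwards [self_mem_nhdsWithin, nhdsWithin_le_nhds hne] with x (hx : x ≠ 0) hx1
  field_simp
  ring

theorem tendsto_atBot_of_tendsto_pow_mul {𝕜 : Type*} [Field 𝕜] [LinearOrder 𝕜]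
    [IsStrictOrderedRing 𝕜] [TopologicalSpace 𝕜] [OrderTopology 𝕜] {f : 𝕜 → 𝕜} {C : 𝕜} {n : ℕ}
    (hn : n ≠ 0) (hC : C < 0) (hf : Tendsto (fun x => x ^ n * f x) (𝓝[>] 0) (𝓝 C)) :
    Tendsto f (𝓝[>] 0) atBot := by
  have hinv : Tendsto (fun x : 𝕜 => x⁻¹ ^ n) (𝓝[>] 0) atTop :=
    (tendsto_pow_atTop hn).comp tendsto_inv_nhdsGT_zero
  refine (hf.neg_mul_atTop hC hinv).congr' ?_
  filter_upwards [self_mem_nhdsWithin] with x (hx : 0 < x)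
  rw [mul_right_comm, ← mul_pow, mul_inv_cancel₀ hx.ne', one_pow, one_mul]

theorem stmt_19 (lam : ℝ) (hlam : 0 < lam) :
    Filter.Tendsto
      (fun x : ℝ => (deriv digamma x) ^ 2 + deriv (deriv digamma) x -
        (x ^ 2 + lam * x + 12) / (12 * x ^ 4 * (x + 1) ^ 2))
      (nhdsWithin 0 (Set.Ioi 0)) Filter.atBot := by
  have hpolygamma := tendsto_pow_three_mul_sq_deriv_digamma_add_sub
  have hrational := tendsto_pow_three_mul_div_sub (1 : ℝ) lam (c := 12) (by norm_num)
  have hlim := (hpolygamma.sub hrational).mono_left (nhdsGT_le_nhdsNE 0)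
  refine tendsto_atBot_of_tendsto_pow_mul three_ne_zero
    (show -2 - (lam / 12 - 2) < 0 by linarith) (hlim.congr fun x => ?_)
  ring
end
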